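/- For every n ≥ 2 the freehedron F_n has exactly 3n − 1 faces of codimension 1: n faces corresponding to the operators d⁰₁, ..., d⁰_n, n − 1 faces corresponding to d¹₂, ..., d¹_n, and n faces corresponding to d²₁ = d¹₁, d²₂, ..., d²_n. In particular F₂ is a pentagon, and F₃ has eight 2-faces (four pentagons and four quadrilaterals), eighteen edges and twelve vertices. -/

import Mathlib

/-!
# Statement 18

For every `n ≥ 2` the freehedron `F_n` has exactly `3n − 1` faces of codimension `1`:
`n` faces `d⁰₁, …, d⁰ₙ`, `n − 1` faces `d¹₂, …, d¹ₙ`, and `n` faces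
`d²₁ = d¹₁, d²₂, …, d²ₙ`.  In particular `F₂` is a pentagon, and `F₃` has eight
`2`-faces (four pentagons and four quadrilaterals), eighteen edges and twelve vertices.

`F_n` is realized here by its inductive description as a subdivision of
`F_{n−1} × [0,1]` inside the cube `[0,1]^n`: the facets are the cubical faces `e⁰ᵢ`
(`d⁰ᵢ`, `1 ≤ i ≤ n`) and `e¹ᵢ` (`d¹ᵢ`, `2 ≤ i ≤ n`), the prisms `d²ᵢ × [0,1]`
(`1 ≤ i ≤ n − 2`) and the two halves `d²_{n−1} × [0,½]`, `d²_{n−1} × [½,1]` labelled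
`d²_{n−1}` and `d²ₙ`.  Vertices are points lying on enough facets, edges are infinite
pairwise intersections of facets, and a `2`-face of `F₃` is a pentagon (resp. a
quadrilateral) when it contains exactly `5` (resp. `4`) edges.
-/

open Set

/-- The product of a subset of `ℝ^n` with an interval, inside `ℝ^{n+1}`. -/
def prodSet {n : ℕ} (A : Set (Fin n → ℝ)) (J : Set ℝ) : Set (Fin (n + 1) → ℝ) :=
  {x | Fin.init x ∈ A ∧ x (Fin.last n) ∈ J}

/-- The cube `[0,1]^n`. -/
def cube (n : ℕ) : Set (Fin n → ℝ) := {x | ∀ i, 0 ≤ x i ∧ x i ≤ 1}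

/-- The facets `d⁰ᵢ(F_n)` (cubical faces `e⁰ᵢ`). -/
def d0face : (n : ℕ) → ℕ → Set (Fin n → ℝ)
  | 0, _ => ∅
  | 1, _ => {fun _ => 0}
  | (n + 2), i =>
      if i = n + 2 then prodSet (cube (n + 1)) {0}
      else prodSet (d0face (n + 1) i) (Set.Icc 0 1)

/-- The facets `d¹ᵢ(F_n)` (cubical faces `e¹ᵢ`), `i ≥ 2`; by convention `d¹₁ = d²₁`. -/
def d1face : (n : ℕ) → ℕ → Set (Fin n → ℝ)
  | 0, _ => ∅
  | 1, _ => {fun _ => 1}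
  | (n + 2), i =>
      if i = n + 2 then prodSet (cube (n + 1)) {1}
      else prodSet (d1face (n + 1) i) (Set.Icc 0 1)

/-- The facets `d²ᵢ(F_n)`: `d²ᵢ(F_{n−1}) × [0,1]` for `i ≤ n − 2` and the two halves
`d²_{n−1}(F_{n−1}) × [0,½]`, `d²_{n−1}(F_{n−1}) × [½,1]` for `i = n − 1, n`. -/
def d2face : (n : ℕ) → ℕ → Set (Fin n → ℝ)
  | 0, _ => ∅
  | 1, _ => {fun _ => 1}
  | (n + 2), i =>
      if i = n + 2 then prodSet (d2face (n + 1) (n + 1)) (Set.Icc (1 / 2) 1)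
      else if i = n + 1 then prodSet (d2face (n + 1) (n + 1)) (Set.Icc 0 (1 / 2))
      else prodSet (d2face (n + 1) i) (Set.Icc 0 1)

/-- The labels of the codimension-one faces of `F_n`: `d⁰ᵢ` for `1 ≤ i ≤ n`, `d¹ᵢ` for
`2 ≤ i ≤ n`, `d²ᵢ` for `1 ≤ i ≤ n` (the label `d¹₁` being identified with `d²₁`). -/
def FacetLabel (n : ℕ) : Type :=
  { j : Fin 3 × ℕ //
    (j.1 = 0 ∧ 1 ≤ j.2 ∧ j.2 ≤ n) ∨ (j.1 = 1 ∧ 2 ≤ j.2 ∧ j.2 ≤ n) ∨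
      (j.1 = 2 ∧ 1 ≤ j.2 ∧ j.2 ≤ n) }

/-- The facet of `F_n` carried by a label. -/
def facetOf (n : ℕ) (L : FacetLabel n) : Set (Fin n → ℝ) :=
  if L.1.1 = 0 then d0face n L.1.2
  else if L.1.1 = 1 then d1face n L.1.2
  else d2face n L.1.2

/-- The edges of the facet `L` of `F₃`. -/
def edgesOf (L : FacetLabel 3) : Set (Set (Fin 3 → ℝ)) :=
  {E | ∃ L' : FacetLabel 3, L' ≠ L ∧ E = facetOf 3 L ∩ facetOf 3 L' ∧ E.Infinite}

/-- The lower corner, in units of `1 / 2`, of the box carried by the label `d^k_i`. -/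
def lowerCorner (k : Fin 3) (i j : ℕ) : ℕ :=
  if k = 0 then 0
  else if k = 1 then (if j + 1 = i then 2 else 0)
  else if j = 0 then 2 else if j < i then 1 else 0

/-- The upper corner, in units of `1 / 2`, of the box carried by the label `d^k_i`. -/
def upperCorner (k : Fin 3) (i j : ℕ) : ℕ :=
  if k = 0 then (if j + 1 = i then 0 else 2)
  else if k = 1 then 2
  else if j = i then 1 else 2

/-- The point of `ℝ^n` with half-integral coordinates `a j / 2`. -/
noncomputable def halfPoint {n : ℕ} (a : Fin n → ℕ) : Fin n → ℝ := fun j => a j / 2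

/-- The axis-parallel box with half-integral corners `a / 2` and `b / 2`. -/
noncomputable def halfBox {n : ℕ} (a b : Fin n → ℕ) : Set (Fin n → ℝ) :=
  Icc (halfPoint a) (halfPoint b)

theorem halfPoint_le_halfPoint {n : ℕ} {a b : Fin n → ℕ} :
    halfPoint a ≤ halfPoint b ↔ a ≤ b := by
  simp [halfPoint, Pi.le_def, div_le_div_iff_of_pos_right]

theorem halfPoint_injective {n : ℕ} :
    Function.Injective (halfPoint : (Fin n → ℕ) → Fin n → ℝ) := fun _ _ h =>
  le_antisymm (halfPoint_le_halfPoint.1 h.le) (halfPoint_le_halfPoint.1 h.ge)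

instance {n : ℕ} (a b : Fin n → ℕ) : Decidable (a ≤ b) :=
  inferInstanceAs (Decidable (∀ j, a j ≤ b j))

theorem mem_halfBox {n : ℕ} {a b : Fin n → ℕ} {x : Fin n → ℝ} :
    x ∈ halfBox a b ↔ ∀ j, (a j : ℝ) / 2 ≤ x j ∧ x j ≤ (b j : ℝ) / 2 := by
  simp [halfBox, halfPoint, Pi.le_def, forall_and]

theorem halfBox_nonempty {n : ℕ} {a b : Fin n → ℕ} : (halfBox a b).Nonempty ↔ a ≤ b := by
  rw [halfBox, nonempty_Icc, halfPoint_le_halfPoint]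

theorem halfBox_inter {n : ℕ} (a b c d : Fin n → ℕ) :
    halfBox a b ∩ halfBox c d = halfBox (a ⊔ c) (b ⊓ d) := by
  ext x
  simp only [mem_inter_iff, mem_halfBox, Pi.sup_apply, Pi.inf_apply, Nat.cast_max, Nat.cast_min,
    ← forall_and]
  refine forall_congr' fun j => ?_
  rw [← max_div_div_right (by norm_num), ← min_div_div_right (by norm_num), max_le_iff, le_min_iff]
  tauto

theorem halfBox_self {n : ℕ} (a : Fin n → ℕ) : halfBox a a = {halfPoint a} := Icc_self _

theorem halfBox_infinite {n : ℕ} {a b : Fin n → ℕ} : (halfBox a b).Infinite ↔ a < b := by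
  constructor
  · intro h
    refine lt_of_le_of_ne (halfBox_nonempty.1 h.nonempty) ?_
    rintro rfl
    exact h (by simp [halfBox_self])
  · intro h
    exact Icc_infinite (lt_of_le_of_ne (halfPoint_le_halfPoint.2 h.le)
      (halfPoint_injective.ne h.ne))

theorem halfBox_inj {n : ℕ} {a b c d : Fin n → ℕ} (hab : a ≤ b)
    (h : halfBox a b = halfBox c d) : a = c ∧ b = d := by
  have hcd : c ≤ d := halfBox_nonempty.1 (h ▸ halfBox_nonempty.2 hab)
  obtain ⟨h₁, h₂⟩ := (Icc_subset_Icc_iff (halfPoint_le_halfPoint.2 hab)).1 h.subset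
  obtain ⟨h₃, h₄⟩ := (Icc_subset_Icc_iff (halfPoint_le_halfPoint.2 hcd)).1 h.symm.subset
  rw [halfPoint_le_halfPoint] at h₁ h₂ h₃ h₄
  exact ⟨le_antisymm h₃ h₁, le_antisymm h₂ h₄⟩

theorem prodSet_halfBox {n : ℕ} (a b : Fin (n + 1) → ℕ) :
    prodSet (halfBox (Fin.init a) (Fin.init b))
      (Icc ((a (Fin.last n) : ℝ) / 2) ((b (Fin.last n) : ℝ) / 2)) = halfBox a b := by
  ext x
  simp [prodSet, mem_halfBox, Fin.forall_fin_succ', Fin.init]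

theorem prodSet_eq_halfBox {n : ℕ} {A : Set (Fin n → ℝ)} {J : Set ℝ} (a b : Fin (n + 1) → ℕ)
    (hA : A = halfBox (Fin.init a) (Fin.init b))
    (hJ : J = Icc ((a (Fin.last n) : ℝ) / 2) ((b (Fin.last n) : ℝ) / 2)) :
    prodSet A J = halfBox a b := by
  rw [hA, hJ, prodSet_halfBox]

theorem cube_eq_halfBox (n : ℕ) : cube n = halfBox (fun _ => 0) (fun _ => 2) := by
  ext x
  simp [cube, mem_halfBox]

theorem d0face_eq_halfBox (n i : ℕ) (h₁ : 1 ≤ i) (h₂ : i ≤ n + 1) :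
    d0face (n + 1) i =
      halfBox (fun j => lowerCorner 0 i j) (fun j => upperCorner 0 i j) := by
  induction n with
  | zero =>
    obtain rfl : i = 1 := by omega
    simp [d0face, halfBox, lowerCorner, upperCorner]
    ext j
    simp [halfPoint]
  | succ n ih =>
    rw [d0face]
    split_ifs with h
    · subst h
      refine prodSet_eq_halfBox _ _ ?_ ?_
      · rw [cube_eq_halfBox]
        congr 1
        ext j
        have := j.2
        simp [Fin.init, upperCorner]
        omega
      · simp [lowerCorner, upperCorner]
    · refine prodSet_eq_halfBox _ _ (ih (by omega)) ?_
      have : n + 1 + 1 ≠ i := by omega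
      simp [lowerCorner, upperCorner, this]

theorem d1face_eq_halfBox (n i : ℕ) (h₁ : 1 ≤ i) (h₂ : i ≤ n + 1) :
    d1face (n + 1) i =
      halfBox (fun j => lowerCorner 1 i j) (fun j => upperCorner 1 i j) := by
  induction n with
  | zero =>
    obtain rfl : i = 1 := by omega
    simp [d1face, halfBox, lowerCorner, upperCorner]
    ext j
    simp [halfPoint]
  | succ n ih =>
    rw [d1face]
    split_ifs with h
    · subst h
      refine prodSet_eq_halfBox _ _ ?_ ?_
      · rw [cube_eq_halfBox]
        congr 1
        ext j
        have := j.2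
        simp [Fin.init, lowerCorner]
        omega
      · simp [lowerCorner, upperCorner]
    · refine prodSet_eq_halfBox _ _ (ih (by omega)) ?_
      have : n + 1 + 1 ≠ i := by omega
      simp [lowerCorner, upperCorner, this]

theorem d2face_eq_halfBox (n i : ℕ) (h₁ : 1 ≤ i) (h₂ : i ≤ n + 1) :
    d2face (n + 1) i =
      halfBox (fun j => lowerCorner 2 i j) (fun j => upperCorner 2 i j) := by
  induction n generalizing i with
  | zero =>
    obtain rfl : i = 1 := by omega
    simp [d2face, halfBox, lowerCorner, upperCorner]
    ext j
    simp [halfPoint]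
  | succ n ih =>
    rw [d2face]
    split_ifs with h h'
    · subst h
      refine prodSet_eq_halfBox _ _ ?_ ?_
      · rw [ih _ (by omega) le_rfl]
        congr 1 <;> ext j <;> have := j.2 <;> simp [Fin.init, lowerCorner, upperCorner] <;> grind
      · simp [lowerCorner, upperCorner]
    · subst h'
      refine prodSet_eq_halfBox _ _ (ih _ (by omega) le_rfl) ?_
      simp [lowerCorner, upperCorner]
    · refine prodSet_eq_halfBox _ _ (ih _ h₁ (by omega)) ?_
      have h₃ : n + 1 ≠ i := by omega
      have h₄ : ¬ n + 1 < i := by omega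
      simp [lowerCorner, upperCorner, h₃, h₄]

namespace FacetLabel

/-- The lower corner of the box carried by a label. -/
def lower {n : ℕ} (L : FacetLabel n) : Fin n → ℕ := fun j => lowerCorner L.1.1 L.1.2 j

/-- The upper corner of the box carried by a label. -/
def upper {n : ℕ} (L : FacetLabel n) : Fin n → ℕ := fun j => upperCorner L.1.1 L.1.2 j

theorem facetOf_eq {n : ℕ} (L : FacetLabel n) : facetOf n L = halfBox L.lower L.upper := by
  obtain ⟨⟨k, i⟩, h⟩ := L
  obtain ⟨n, rfl⟩ : ∃ m, n = m + 1 := ⟨n - 1, by omega⟩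
  rcases h with ⟨hk, h₁, h₂⟩ | ⟨hk, h₁, h₂⟩ | ⟨hk, h₁, h₂⟩ <;> dsimp only at hk h₁ h₂ <;> subst hk
  · exact d0face_eq_halfBox n i h₁ h₂
  · exact d1face_eq_halfBox n i (by omega) h₂
  · exact d2face_eq_halfBox n i h₁ h₂

theorem lower_le_upper {n : ℕ} (L : FacetLabel n) : L.lower ≤ L.upper := by
  obtain ⟨⟨k, i⟩, h⟩ := L
  intro j
  simp only [lower, upper, lowerCorner, upperCorner]
  grind

theorem facetOf_nonempty {n : ℕ} (L : FacetLabel n) : (facetOf n L).Nonempty := by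
  rw [facetOf_eq, halfBox_nonempty]
  exact L.lower_le_upper

theorem facetOf_injective (n : ℕ) : Function.Injective (facetOf n) := by
  intro L L' hbox
  rw [facetOf_eq, facetOf_eq] at hbox
  obtain ⟨hl, hu⟩ := halfBox_inj L.lower_le_upper hbox
  obtain ⟨⟨k, i⟩, h⟩ := L
  obtain ⟨⟨k', i'⟩, h'⟩ := L'
  have hl' (j : ℕ) (hj : j < n) : lowerCorner k i j = lowerCorner k' i' j := congrFun hl ⟨j, hj⟩
  have hu' (j : ℕ) (hj : j < n) : upperCorner k i j = upperCorner k' i' j := congrFun hu ⟨j, hj⟩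
  dsimp only at h h'
  have hi : 1 ≤ i ∧ i ≤ n := by omega
  have hi' : 1 ≤ i' ∧ i' ≤ n := by omega
  have l₀ := hl' 0 (by omega)
  have l₁ := hl' (i - 1) (by omega)
  have l₂ := hl' (i' - 1) (by omega)
  have u₁ := hu' (i - 1) (by omega)
  have u₂ := hu' (i' - 1) (by omega)
  have u₃ := hu' i
  have u₄ := hu' i'
  clear hbox hl hu hl' hu'
  simp only [lowerCorner, upperCorner] at l₀ l₁ l₂ u₁ u₂ u₃ u₄
  apply Subtype.ext
  rcases h with ⟨rfl, h⟩ | ⟨rfl, h⟩ | ⟨rfl, h⟩ <;>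
    rcases h' with ⟨rfl, h'⟩ | ⟨rfl, h'⟩ | ⟨rfl, h'⟩ <;>
    simp at l₀ l₁ l₂ u₁ u₂ u₃ u₄ ⊢ <;> grind

/-- The labels of `F_n` split according to their upper index. -/
def equivSum (n : ℕ) : FacetLabel n ≃ Fin n ⊕ Fin (n - 1) ⊕ Fin n where
  toFun L :=
    if h₀ : L.1.1 = 0 then .inl ⟨L.1.2 - 1, by have := L.2; grind⟩
    else if h₁ : L.1.1 = 1 then .inr (.inl ⟨L.1.2 - 2, by have := L.2; grind⟩)
    else .inr (.inr ⟨L.1.2 - 1, by have := L.2; grind⟩)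
  invFun
    | .inl j => ⟨(0, j + 1), by grind⟩
    | .inr (.inl j) => ⟨(1, j + 2), by grind⟩
    | .inr (.inr j) => ⟨(2, j + 1), by grind⟩
  left_inv := by
    rintro ⟨⟨k, i⟩, h⟩
    apply Subtype.ext
    rcases h with ⟨hk, h⟩ | ⟨hk, h⟩ | ⟨hk, h⟩ <;> dsimp only at hk h <;> subst hk <;>
      simp <;> omega
  right_inv := by
    rintro (_ | _ | _) <;> simp

instance (n : ℕ) : Fintype (FacetLabel n) := Fintype.ofEquiv _ (equivSum n).symm

instance (n : ℕ) : DecidableEq (FacetLabel n) :=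
  inferInstanceAs (DecidableEq { j : Fin 3 × ℕ // _ })

theorem natCard (n : ℕ) : Nat.card (FacetLabel n) = 3 * n - 1 := by
  rw [Nat.card_congr (equivSum n)]
  simp
  omega

end FacetLabel

theorem frontier_cube (n : ℕ) :
    frontier (cube n) = {x | x ∈ cube n ∧ ∃ j, x j = 0 ∨ x j = 1} := by
  have h : cube n = univ.pi fun _ => Icc (0 : ℝ) 1 := by
    ext x
    simp only [cube, mem_ofPred_eq, mem_univ_pi, mem_Icc]
  rw [h, (isClosed_set_pi fun _ _ => isClosed_Icc).frontier_eq, interior_pi_set finite_univ]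
  ext x
  simp only [interior_Icc, mem_sdiff, mem_univ_pi, mem_Icc, mem_Ioo, mem_ofPred_eq, not_forall]
  refine and_congr_right fun hx => exists_congr fun j => ?_
  have := hx j
  grind

theorem iUnion_facetOf (n : ℕ) : (⋃ L : FacetLabel n, facetOf n L) = frontier (cube n) := by
  ext x
  simp only [frontier_cube, mem_iUnion, FacetLabel.facetOf_eq, mem_halfBox, FacetLabel.lower,
    FacetLabel.upper, mem_ofPred_eq]
  constructor
  · rintro ⟨⟨⟨k, i⟩, h⟩, hx⟩
    refine ⟨fun j => ?_, ?_⟩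
    · have := hx j
      simp only [lowerCorner, upperCorner] at this
      split_ifs at this <;> norm_num at this <;> constructor <;> linarith
    · rcases h with ⟨hk, h⟩ | ⟨hk, h⟩ | ⟨hk, h⟩ <;> dsimp only at hk h <;> subst hk
      · refine ⟨⟨i - 1, by omega⟩, .inl ?_⟩
        have := hx ⟨i - 1, by omega⟩
        simp [lowerCorner, upperCorner, show i - 1 + 1 = i by omega] at this
        linarith
      · refine ⟨⟨i - 1, by omega⟩, .inr ?_⟩
        have := hx ⟨i - 1, by omega⟩
        simp [lowerCorner, upperCorner, show i - 1 + 1 = i by omega] at this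
        linarith
      · refine ⟨⟨0, by omega⟩, .inr ?_⟩
        have := hx ⟨0, by omega⟩
        simp [lowerCorner, upperCorner, show 0 ≠ i by omega] at this
        linarith
  · rintro ⟨hx, j, hj⟩
    by_cases hj₀ : x j = 0
    · refine ⟨⟨(0, j + 1), by grind⟩, fun l => ?_⟩
      have := hx l
      by_cases hl : l = j
      · simp [lowerCorner, upperCorner, hl, hj₀]
      · simpa [lowerCorner, upperCorner, Fin.val_inj, hl] using this
    have hj₁ : x j = 1 := by tauto
    by_cases hj' : (j : ℕ) = 0
    · have hex : ∃ i, 1 ≤ i ∧ ∀ h : i < n, x ⟨i, h⟩ ≤ 1 / 2 :=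
        ⟨n, by have := j.2; omega, fun h => absurd h (lt_irrefl n)⟩
      classical
      obtain ⟨hi, hi'⟩ := Nat.find_spec hex
      have hmin : ∀ m, m < Nat.find hex → _ := fun m => Nat.find_min hex
      have hn : Nat.find hex ≤ n :=
        Nat.find_min' hex ⟨by have := j.2; omega, fun h => absurd h (lt_irrefl n)⟩
      generalize Nat.find hex = i at hi hi' hmin hn
      refine ⟨⟨(2, i), by grind⟩, fun l => ?_⟩
      have hl := hx l
      simp only [lowerCorner, upperCorner]
      by_cases hl₀ : (l : ℕ) = 0
      · obtain rfl : l = j := Fin.ext (by omega)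
        simp [hl₀, hj₁, show 0 ≠ i by omega]
      · rcases lt_trichotomy (l : ℕ) i with hli | hli | hli
        · have := hmin l hli
          simp only [not_and, not_forall, not_le] at this
          obtain ⟨_, h⟩ := this (by omega)
          simp [hl₀, hli, hli.ne]
          exact ⟨by linarith [h], hl.2⟩
        · subst hli
          have := hi' l.2
          simp [hl₀]
          exact ⟨hl.1, by linarith [this]⟩
        · simpa [hl₀, hli.ne', hli.not_gt] using hl
    · refine ⟨⟨(1, j + 1), by grind⟩, fun l => ?_⟩
      have := hx l
      by_cases hl : l = j
      · simp [lowerCorner, upperCorner, hl, hj₁]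
      · simpa [lowerCorner, upperCorner, Fin.val_inj, hl] using this

theorem ncard_vertices_two :
    {v : Fin 2 → ℝ | ∃ L L' : FacetLabel 2,
      L ≠ L' ∧ v ∈ facetOf 2 L ∩ facetOf 2 L'}.ncard = 5 := by
  have hpoint : ∀ L L' : FacetLabel 2, L ≠ L' → L.lower ⊔ L'.lower ≤ L.upper ⊓ L'.upper →
      L.lower ⊔ L'.lower = L.upper ⊓ L'.upper := by decide +kernel
  have hset : {v : Fin 2 → ℝ | ∃ L L' : FacetLabel 2, L ≠ L' ∧ v ∈ facetOf 2 L ∩ facetOf 2 L'} =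
      halfPoint '' ↑(Finset.image (fun p : FacetLabel 2 × FacetLabel 2 => p.1.lower ⊔ p.2.lower)
        {p | p.1 ≠ p.2 ∧ p.1.lower ⊔ p.2.lower ≤ p.1.upper ⊓ p.2.upper}) := by
    ext v
    simp only [FacetLabel.facetOf_eq, halfBox_inter, mem_ofPred_eq, mem_image, Finset.coe_image,
      Finset.coe_filter, Finset.mem_univ, true_and, Prod.exists]
    constructor
    · rintro ⟨L, L', hne, hv⟩
      have hle := halfBox_nonempty.1 ⟨v, hv⟩
      rw [← hpoint L L' hne hle, halfBox_self] at hv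
      exact ⟨_, ⟨L, L', ⟨hne, hle⟩, rfl⟩, hv.symm⟩
    · rintro ⟨_, ⟨L, L', ⟨hne, hle⟩, rfl⟩, rfl⟩
      refine ⟨L, L', hne, ?_⟩
      rw [← hpoint L L' hne hle, halfBox_self]
      rfl
  rw [hset, ncard_image_of_injective _ halfPoint_injective, ncard_coe_finset]
  decide +kernel

theorem ncard_vertices_three :
    {v : Fin 3 → ℝ | ∃ L L' L'' : FacetLabel 3, L ≠ L' ∧ L ≠ L'' ∧ L' ≠ L'' ∧
      v ∈ facetOf 3 L ∩ facetOf 3 L' ∩ facetOf 3 L''}.ncard = 12 := by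
  have hpoint : ∀ L L' L'' : FacetLabel 3, L ≠ L' ∧ L ≠ L'' ∧ L' ≠ L'' →
      L.lower ⊔ L'.lower ⊔ L''.lower ≤ L.upper ⊓ L'.upper ⊓ L''.upper →
      L.lower ⊔ L'.lower ⊔ L''.lower = L.upper ⊓ L'.upper ⊓ L''.upper := by decide +kernel
  have hset : {v : Fin 3 → ℝ | ∃ L L' L'' : FacetLabel 3, L ≠ L' ∧ L ≠ L'' ∧ L' ≠ L'' ∧
      v ∈ facetOf 3 L ∩ facetOf 3 L' ∩ facetOf 3 L''} =
      halfPoint '' ↑(Finset.image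
        (fun p : FacetLabel 3 × FacetLabel 3 × FacetLabel 3 =>
          p.1.lower ⊔ p.2.1.lower ⊔ p.2.2.lower)
        {p | (p.1 ≠ p.2.1 ∧ p.1 ≠ p.2.2 ∧ p.2.1 ≠ p.2.2) ∧
          p.1.lower ⊔ p.2.1.lower ⊔ p.2.2.lower ≤ p.1.upper ⊓ p.2.1.upper ⊓ p.2.2.upper}) := by
    ext v
    simp only [FacetLabel.facetOf_eq, halfBox_inter, mem_ofPred_eq, mem_image, Finset.coe_image,
      Finset.coe_filter, Finset.mem_univ, true_and, Prod.exists]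
    constructor
    · rintro ⟨L, L', L'', h₁, h₂, h₃, hv⟩
      have hle := halfBox_nonempty.1 ⟨v, hv⟩
      rw [← hpoint L L' L'' ⟨h₁, h₂, h₃⟩ hle, halfBox_self] at hv
      exact ⟨_, ⟨L, L', L'', ⟨⟨h₁, h₂, h₃⟩, hle⟩, rfl⟩, hv.symm⟩
    · rintro ⟨_, ⟨L, L', L'', ⟨⟨h₁, h₂, h₃⟩, hle⟩, rfl⟩, rfl⟩
      refine ⟨L, L', L'', h₁, h₂, h₃, ?_⟩
      rw [← hpoint L L' L'' ⟨h₁, h₂, h₃⟩ hle, halfBox_self]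
      rfl
  rw [hset, ncard_image_of_injective _ halfPoint_injective, ncard_coe_finset]
  decide +kernel

/-- The corners of the intersection of two facets. -/
def cornersInter {n : ℕ} (p : FacetLabel n × FacetLabel n) : (Fin n → ℕ) × (Fin n → ℕ) :=
  (p.1.lower ⊔ p.2.lower, p.1.upper ⊓ p.2.upper)

theorem halfBox_cornersInter {n : ℕ} (L L' : FacetLabel n) :
    halfBox (cornersInter (L, L')).1 (cornersInter (L, L')).2 = facetOf n L ∩ facetOf n L' := by
  rw [FacetLabel.facetOf_eq, FacetLabel.facetOf_eq, halfBox_inter, cornersInter]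

/-- Infinite intersections of facets are counted by their corners. -/
theorem ncard_infinite_inter {n : ℕ} (S : Finset (FacetLabel n × FacetLabel n)) :
    {E | ∃ p ∈ S, E = facetOf n p.1 ∩ facetOf n p.2 ∧ E.Infinite}.ncard =
      ((S.image cornersInter).filter fun q => q.1 ≤ q.2 ∧ q.1 ≠ q.2).card := by
  have hset : {E | ∃ p ∈ S, E = facetOf n p.1 ∩ facetOf n p.2 ∧ E.Infinite} =
      (fun q : (Fin n → ℕ) × (Fin n → ℕ) => halfBox q.1 q.2) ''
        ↑((S.image cornersInter).filter fun q => q.1 ≤ q.2 ∧ q.1 ≠ q.2) := by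
    ext E
    simp only [mem_ofPred_eq, mem_image, Finset.mem_coe, Finset.mem_filter, Finset.mem_image,
      ← lt_iff_le_and_ne]
    constructor
    · rintro ⟨p, hp, rfl, hinf⟩
      rw [← halfBox_cornersInter] at hinf ⊢
      exact ⟨_, ⟨⟨p, hp, rfl⟩, halfBox_infinite.1 hinf⟩, rfl⟩
    · rintro ⟨_, ⟨⟨p, hp, rfl⟩, hlt⟩, rfl⟩
      exact ⟨p, hp, halfBox_cornersInter _ _, halfBox_infinite.2 hlt⟩
  rw [hset, InjOn.ncard_image, ncard_coe_finset]
  intro q hq r _ h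
  obtain ⟨h₁, h₂⟩ := halfBox_inj (Finset.mem_filter.1 hq).2.1 h
  exact Prod.ext h₁ h₂

theorem ncard_edges_three :
    {E : Set (Fin 3 → ℝ) | ∃ L L' : FacetLabel 3,
      L ≠ L' ∧ E = facetOf 3 L ∩ facetOf 3 L' ∧ E.Infinite}.ncard = 18 := by
  have h := ncard_infinite_inter (n := 3) {p | p.1 ≠ p.2}
  simp only [Finset.mem_filter, Finset.mem_univ, true_and, Prod.exists] at h
  rw [h]
  decide +kernel

theorem ncard_edgesOf (L : FacetLabel 3) :
    (edgesOf L).ncard = (((Finset.univ.filter fun p : FacetLabel 3 × FacetLabel 3 =>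
      p.1 = L ∧ p.2 ≠ L).image cornersInter).filter fun q => q.1 ≤ q.2 ∧ q.1 ≠ q.2).card := by
  rw [← ncard_infinite_inter, edgesOf]
  simp [and_assoc]

theorem ncard_edgesOf_eq_five : {L : FacetLabel 3 | (edgesOf L).ncard = 5}.ncard = 4 := by
  simp only [ncard_edgesOf]
  rw [ncard_eq_toFinset_card', toFinset_ofPred]
  decide +kernel

theorem ncard_edgesOf_eq_four : {L : FacetLabel 3 | (edgesOf L).ncard = 4}.ncard = 4 := by
  simp only [ncard_edgesOf]
  rw [ncard_eq_toFinset_card', toFinset_ofPred]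
  decide +kernel

/-- **Statement 18**: the freehedron `F_n` (`n ≥ 2`) has exactly `3n − 1` pairwise
distinct nonempty codimension-one faces `d⁰₁,…,d⁰ₙ, d¹₂,…,d¹ₙ, d²₁,…,d²ₙ`, which cover
the boundary of the underlying cube; `F₂` is a pentagon (5 facets and 5 vertices); and
`F₃` has eight 2-faces — four pentagons and four quadrilaterals — eighteen edges and
twelve vertices. -/
theorem freehedron_face_counts (n : ℕ) (hn : 2 ≤ n) :
    -- the `3n − 1` labelled facets are pairwise distinct and nonempty …
    Function.Injective (facetOf n) ∧
    (∀ L : FacetLabel n, (facetOf n L).Nonempty) ∧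
    Nat.card (FacetLabel n) = 3 * n - 1 ∧
    -- … and cover the topological boundary of the cube, so they are exactly the
    -- codimension-one faces of `F_n`
    (⋃ L : FacetLabel n, facetOf n L) = frontier (cube n) ∧
    -- `F₂` is a pentagon: 5 facets and 5 vertices
    Nat.card (FacetLabel 2) = 5 ∧
    {v : Fin 2 → ℝ | ∃ L L' : FacetLabel 2,
      L ≠ L' ∧ v ∈ facetOf 2 L ∩ facetOf 2 L'}.ncard = 5 ∧
    -- `F₃` has eight 2-faces, twelve vertices, eighteen edges …
    Nat.card (FacetLabel 3) = 8 ∧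
    {v : Fin 3 → ℝ | ∃ L L' L'' : FacetLabel 3, L ≠ L' ∧ L ≠ L'' ∧ L' ≠ L'' ∧
      v ∈ facetOf 3 L ∩ facetOf 3 L' ∩ facetOf 3 L''}.ncard = 12 ∧
    {E : Set (Fin 3 → ℝ) | ∃ L L' : FacetLabel 3,
      L ≠ L' ∧ E = facetOf 3 L ∩ facetOf 3 L' ∧ E.Infinite}.ncard = 18 ∧
    -- … of which four are pentagons and four are quadrilaterals
    {L : FacetLabel 3 | (edgesOf L).ncard = 5}.ncard = 4 ∧
    {L : FacetLabel 3 | (edgesOf L).ncard = 4}.ncard = 4 := by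
  exact ⟨FacetLabel.facetOf_injective n, FacetLabel.facetOf_nonempty, FacetLabel.natCard n,
    iUnion_facetOf n, FacetLabel.natCard 2, ncard_vertices_two, FacetLabel.natCard 3,
    ncard_vertices_three, ncard_edges_three, ncard_edgesOf_eq_five, ncard_edgesOf_eq_four⟩
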